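/- arXiv:0911.5030 — 6 statements merged into one kernel-verified Lean document; each statement's English description precedes it below -/
import Mathlib

section
/- Let N be odd and let J_x, J_y, J_z be arbitrary real couplings. Then every eigenvalue of the periodic XYZ Hamiltonian H_XYZ on V_N is at least doubly degenerate: for every λ ∈ ℂ, if the eigenspace {Ψ ∈ V_N : H_XYZ Ψ = λ Ψ} is nonzero, then its complex dimension is at least 2. -/
open Finset

/-- Spin configurations of length `N`: maps `ℤ/N → {−1,+1}` (spins encoded as units of `ℤ`). -/
abbrev Config (N : ℕ) : Type := ZMod N → ℤˣ

/-- The state space `V_N`: complex-valued functions on configurations. -/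
abbrev StateSpace (N : ℕ) : Type := Config N → ℂ

/-- The spin value `μ_j` as a complex number (`+1` or `−1`). -/
def spin {N : ℕ} (μ : Config N) (j : ZMod N) : ℂ := ((μ j : ℤ) : ℂ)

/-- Flip the spin at site `j`. -/
def flipAt {N : ℕ} (μ : Config N) (j : ZMod N) : Config N :=
  Function.update μ j (-(μ j))

/-- `μ^{(j,j+1)}`: the configuration `μ` with the spins at sites `j` and `j+1` (mod `N`) flipped. -/
def flipPair {N : ℕ} (μ : Config N) (j : ZMod N) : Config N :=
  flipAt (flipAt μ j) (j + 1)

/-- The periodic XYZ Hamiltonian with real couplings `Jx, Jy, Jz`: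
`(H Ψ)(μ) = −(1/2) Σ_j [(Jx − Jy μ_j μ_{j+1}) Ψ(μ^{(j,j+1)}) + Jz μ_j μ_{j+1} Ψ(μ)]`. -/
noncomputable def Hxyz (N : ℕ) [NeZero N] (Jx Jy Jz : ℝ) (Ψ : StateSpace N) : StateSpace N :=
  fun μ => -(1/2 : ℂ) * ∑ j : ZMod N,
    (((Jx : ℂ) - (Jy : ℂ) * spin μ j * spin μ (j + 1)) * Ψ (flipPair μ j)
      + (Jz : ℂ) * spin μ j * spin μ (j + 1) * Ψ μ)

/-- The periodic XYZ Hamiltonian as a linear operator on `V_N`. -/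
noncomputable def HxyzL (N : ℕ) [NeZero N] (Jx Jy Jz : ℝ) : Module.End ℂ (StateSpace N) where
  toFun := Hxyz N Jx Jy Jz
  map_add' Ψ Φ := by
    funext μ
    simp only [Hxyz, Pi.add_apply, mul_add, add_mul, Finset.sum_add_distrib]
    ring
  map_smul' c Ψ := by
    funext μ
    simp only [Hxyz, Pi.smul_apply, smul_eq_mul, RingHom.id_apply, mul_add, add_mul,
      Finset.mul_sum, Finset.sum_add_distrib]
    congr 1 <;> exact Finset.sum_congr rfl (fun j _ => by ring)

/-!
Let `R` reverse all spins and let `P` multiply `Ψ μ` by `∏ j, μ_j`; both are invertible. `R`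
commutes with the Hamiltonian because reversing all spins preserves `μ_j μ_{j+1}`, and `P` does
because flipping a pair of spins preserves `∏ j, μ_j`. For odd `N` reversing all spins negates this
product, so `R P = -P R`. On an eigenspace of dimension `d` this gives
`det R * det P = (-1) ^ d * (det P * det R)` with nonzero determinants, so `d` is even.
-/

section Anticommuting

variable {R M : Type*} [CommRing R] [IsDomain R] [AddCommGroup M] [Module R M]

theorem det_ne_zero_of_injective [Module.Free R M] {f : Module.End R M}
    (hf : Function.Injective f) : LinearMap.det f ≠ 0 := fun hdet =>
  (LinearMap.bot_lt_ker_of_det_eq_zero hdet).ne' (LinearMap.ker_eq_bot.2 hf)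

theorem even_finrank_of_injective_of_mul_eq_neg_mul [Module.Free R M] (hR : (-1 : R) ≠ 1)
    {A B : Module.End R M} (hA : Function.Injective A) (hB : Function.Injective B)
    (hAB : A * B = -(B * A)) : Even (Module.finrank R M) := by
  rw [← neg_one_pow_eq_one_iff_even hR]
  have hBA : LinearMap.det B * LinearMap.det A ≠ 0 :=
    mul_ne_zero (det_ne_zero_of_injective hB) (det_ne_zero_of_injective hA)
  refine mul_right_cancel₀ hBA ?_
  calc (-1) ^ Module.finrank R M * (LinearMap.det B * LinearMap.det A)
      = LinearMap.det (-(B * A)) := by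
        rw [← neg_one_smul R (B * A), LinearMap.det_smul, map_mul]
    _ = LinearMap.det (A * B) := by rw [hAB]
    _ = 1 * (LinearMap.det B * LinearMap.det A) := by rw [map_mul, mul_comm, one_mul]

theorem even_finrank_genEigenspace_of_commute_of_mul_eq_neg_mul (hR : (-1 : R) ≠ 1)
    {T A B : Module.End R M} (hTA : Commute T A) (hTB : Commute T B)
    (hA : Function.Injective A) (hB : Function.Injective B) (hAB : A * B = -(B * A))
    (c : R) (k : ℕ∞) [Module.Free R (T.genEigenspace c k)] :
    Even (Module.finrank R (T.genEigenspace c k)) := by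
  have hmapsA := Module.End.mapsTo_genEigenspace_of_comm hTA c k
  have hmapsB := Module.End.mapsTo_genEigenspace_of_comm hTB c k
  refine even_finrank_of_injective_of_mul_eq_neg_mul hR
    (A := A.restrict hmapsA) (B := B.restrict hmapsB)
    (hmapsA.restrict_inj.2 hA.injOn) (hmapsB.restrict_inj.2 hB.injOn) ?_
  ext v
  exact LinearMap.congr_fun hAB v

end Anticommuting

section SpinFlips

variable {N : ℕ}

theorem spin_neg (μ : Config N) (j : ZMod N) : spin (-μ) j = -spin μ j := by
  simp [spin]

theorem flipAt_neg (μ : Config N) (j : ZMod N) : flipAt (-μ) j = -flipAt μ j :=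
  Function.update_neg μ j (-μ j)

theorem flipPair_neg (μ : Config N) (j : ZMod N) : flipPair (-μ) j = -flipPair μ j := by
  rw [flipPair, flipPair, flipAt_neg, flipAt_neg]

theorem flipAt_eq_mulSingle_mul (μ : Config N) (j : ZMod N) :
    flipAt μ j = Pi.mulSingle j (-1) * μ := by
  ext k
  obtain rfl | hkj := eq_or_ne k j
  · simp [flipAt]
  · simp [flipAt, hkj]

variable [NeZero N]

/-- The product of all spins of a configuration, i.e. the parity of the number of down spins. -/
def spinParity (μ : Config N) : ℤˣ := ∏ j, μ j

theorem spinParity_neg (hN : Odd N) (μ : Config N) : spinParity (-μ) = -spinParity μ := by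
  simp [spinParity, Finset.prod_neg, ZMod.card, hN.neg_one_pow]

theorem spinParity_flipAt (μ : Config N) (j : ZMod N) :
    spinParity (flipAt μ j) = -spinParity μ := by
  simp [spinParity, flipAt_eq_mulSingle_mul, Finset.prod_mul_distrib, Finset.prod_pi_mulSingle']

theorem spinParity_flipPair (μ : Config N) (j : ZMod N) :
    spinParity (flipPair μ j) = spinParity μ := by
  rw [flipPair, spinParity_flipAt, spinParity_flipAt, neg_neg]

end SpinFlips

section Symmetries

/-- The global spin reversal operator `R` on the state space, `(R Ψ)(μ) = Ψ(-μ)`. -/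
def spinReversal (N : ℕ) : Module.End ℂ (StateSpace N) :=
  LinearMap.funLeft ℂ ℂ Neg.neg

theorem spinReversal_apply {N : ℕ} (Ψ : StateSpace N) (μ : Config N) :
    spinReversal N Ψ μ = Ψ (-μ) :=
  rfl

theorem spinReversal_injective (N : ℕ) : Function.Injective (spinReversal N) :=
  LinearMap.funLeft_injective_of_surjective ℂ ℂ _ neg_surjective

variable (N : ℕ) [NeZero N]

/-- The parity operator `P` on the state space, diagonal in the spin basis:
`(P Ψ)(μ) = (∏ j, μ_j) Ψ(μ)`. -/
def parityOperator : Module.End ℂ (StateSpace N) :=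
  LinearMap.mulLeft ℂ fun μ => ((spinParity μ : ℤ) : ℂ)

variable {N} in
theorem parityOperator_apply (Ψ : StateSpace N) (μ : Config N) :
    parityOperator N Ψ μ = ((spinParity μ : ℤ) : ℂ) * Ψ μ :=
  rfl

theorem parityOperator_injective : Function.Injective (parityOperator N) := by
  intro Ψ Φ hΨΦ
  ext μ
  have hμ : ((spinParity μ : ℤ) : ℂ) ≠ 0 := Int.cast_ne_zero.2 (spinParity μ).ne_zero
  exact mul_left_cancel₀ hμ (congrFun hΨΦ μ)

variable {N} in
theorem spinReversal_mul_parityOperator (hN : Odd N) :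
    spinReversal N * parityOperator N = -(parityOperator N * spinReversal N) := by
  refine LinearMap.ext fun Ψ => funext fun μ => ?_
  simp [spinReversal_apply, parityOperator_apply, spinParity_neg hN]

variable (Jx Jy Jz : ℝ)

theorem commute_HxyzL_spinReversal : Commute (HxyzL N Jx Jy Jz) (spinReversal N) := by
  refine LinearMap.ext fun Ψ => funext fun μ => ?_
  simp [HxyzL, Hxyz, spinReversal_apply, flipPair_neg, spin_neg]

theorem commute_HxyzL_parityOperator : Commute (HxyzL N Jx Jy Jz) (parityOperator N) := by
  refine LinearMap.ext fun Ψ => funext fun μ => ?_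
  simp only [HxyzL, Hxyz, Module.End.mul_apply, LinearMap.coe_mk, AddHom.coe_mk,
    parityOperator_apply, spinParity_flipPair, Finset.mul_sum]
  exact Finset.sum_congr rfl fun j _ => by ring

end Symmetries

theorem xyz_eigenvalue_doubly_degenerate_general (N : ℕ) [NeZero N] (hN : Odd N)
    (Jx Jy Jz : ℝ) (lam : ℂ) :
    Even (Module.finrank ℂ (Module.End.eigenspace (HxyzL N Jx Jy Jz) lam)) :=
  even_finrank_genEigenspace_of_commute_of_mul_eq_neg_mul (by norm_num)
    (commute_HxyzL_spinReversal N Jx Jy Jz) (commute_HxyzL_parityOperator N Jx Jy Jz)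
    (spinReversal_injective N) (parityOperator_injective N)
    (spinReversal_mul_parityOperator hN) lam 1

/-- For odd `N`, every eigenvalue of the periodic XYZ Hamiltonian is at least doubly
degenerate: every nonzero eigenspace has complex dimension at least `2`. -/
theorem xyz_eigenvalue_doubly_degenerate (N : ℕ) [NeZero N] (hN : Odd N)
    (Jx Jy Jz : ℝ) (lam : ℂ)
    (h : Module.End.eigenspace (HxyzL N Jx Jy Jz) lam ≠ ⊥) :
    2 ≤ Module.finrank ℂ (Module.End.eigenspace (HxyzL N Jx Jy Jz) lam) :=
  Nat.le_of_dvd (Nat.pos_of_ne_zero (Submodule.finrank_eq_zero.not.2 h))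
    (xyz_eigenvalue_doubly_degenerate_general N hN Jx Jy Jz lam).two_dvd
end

section
/- For every N ≥ 1 and every α ∈ ℝ with α ≠ 1, the operator identity R^y ∘ H(α) = ((α−1)²/4) · H((α+3)/(α−1)) ∘ R^y holds on V_N, where R^y is the operator of rotation of every spin by the angle π/2 about the y-axis. -/
open Finset

/-- `H(α)`: the XYZ Hamiltonian with `Jx = 1+α`, `Jy = 1−α`, `Jz = (α²−1)/2`. -/
noncomputable def Halpha (N : ℕ) [NeZero N] (α : ℝ) : StateSpace N → StateSpace N :=
  Hxyz N (1 + α) (1 - α) ((α ^ 2 - 1) / 2)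

/-- `m(μ,ν) = #{j : μ_j = −1 and ν_j = +1}`. -/
def mCount {N : ℕ} [NeZero N] (μ ν : Config N) : ℕ :=
  (Finset.univ.filter (fun j => μ j = -1 ∧ ν j = 1)).card

/-- Rotation of every spin by π/2 about the y-axis:
`(Rʸ Ψ)(μ) = 2^{−N/2} Σ_ν (−1)^{m(μ,ν)} Ψ(ν)`. -/
noncomputable def Ry (N : ℕ) [NeZero N] (Ψ : StateSpace N) : StateSpace N :=
  fun μ => ((Real.sqrt 2 : ℂ) ^ N)⁻¹ * ∑ ν : Config N, (-1 : ℂ) ^ mCount μ ν * Ψ ν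

/-!
The kernel of `Rʸ` is a product over the sites, so flipping one spin in either argument only
multiplies it by a spin of the other argument: `Rʸ σˣⱼ = σᶻⱼ Rʸ` and `Rʸ σᶻⱼ = -σˣⱼ Rʸ`. On a bond
the two signs cancel, and since `σˣᵢ σˣⱼ` commutes with `σᶻᵢ σᶻⱼ`, the rotation preserves the
`y`-interaction and exchanges `Jx` with `Jz` in the XYZ Hamiltonian. The triple
`((α² - 1)/2, 1 - α, 1 + α)` so obtained from `H(α)` is `(α - 1)²/4` times the triple of couplings
at the parameter `(α + 3)/(α - 1)`.
-/

section Semiconjugation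

variable {A : Type*} [Semigroup A] [HasDistribNeg A]

lemma semiconjBy_mul_of_neg {r a b c d : A} (hac : SemiconjBy r a (-c))
    (hbd : SemiconjBy r b (-d)) : SemiconjBy r (a * b) (c * d) := by
  simpa only [neg_mul_neg] using hac.mul_right hbd

lemma commute_mul_mul_of_anticommute {x y z w : A} (hxz : SemiconjBy x z (-z))
    (hxw : Commute x w) (hyz : Commute y z) (hyw : SemiconjBy y w (-w)) :
    Commute (x * y) (z * w) := by
  have hx : SemiconjBy x (z * -w) (z * w) := by
    simpa only [neg_mul_neg] using hxz.mul_right (SemiconjBy.neg_right hxw)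
  exact hx.mul_left (SemiconjBy.mul_right hyz hyw)

end Semiconjugation

section SignKernel

lemma prod_eq_mul_prod_of_eq_on_ne {ι M : Type*} [Fintype ι] [CommMonoid M]
    {f g : ι → M} {c : M} (j : ι) (hj : f j = c * g j) (hne : ∀ i ≠ j, f i = g i) :
    ∏ i, f i = c * ∏ i, g i := by
  classical
  have herase : ∏ i ∈ univ.erase j, f i = ∏ i ∈ univ.erase j, g i :=
    prod_congr rfl fun i hi => hne i (ne_of_mem_erase hi)
  rw [← mul_prod_erase univ f (mem_univ j), ← mul_prod_erase univ g (mem_univ j), hj, herase,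
    mul_assoc]

/-- The entry in row `a` and column `b` of `√2` times the matrix rotating a single spin by `π/2`
about the `y`-axis. -/
def siteSign (a b : ℤˣ) : ℂ := if a = -1 ∧ b = 1 then -1 else 1

lemma siteSign_neg_right (a b : ℤˣ) : siteSign a (-b) = ((a : ℤ) : ℂ) * siteSign a b := by
  rcases Int.units_eq_one_or a with rfl | rfl <;>
    rcases Int.units_eq_one_or b with rfl | rfl <;> simp [siteSign]

lemma siteSign_neg_left (a b : ℤˣ) : siteSign (-a) b = -((b : ℤ) : ℂ) * siteSign a b := by
  rcases Int.units_eq_one_or a with rfl | rfl <;>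
    rcases Int.units_eq_one_or b with rfl | rfl <;> simp [siteSign]

variable {N : ℕ} [NeZero N]

lemma neg_one_pow_mCount (μ ν : Config N) :
    (-1 : ℂ) ^ mCount μ ν = ∏ j, siteSign (μ j) (ν j) := by
  simp only [mCount, siteSign, prod_ite, prod_const, one_pow, mul_one]

lemma neg_one_pow_mCount_flipAt_right (μ ν : Config N) (j : ZMod N) :
    (-1 : ℂ) ^ mCount μ (flipAt ν j) = spin μ j * (-1 : ℂ) ^ mCount μ ν := by
  simp only [neg_one_pow_mCount]
  refine prod_eq_mul_prod_of_eq_on_ne j ?_ fun i hij => ?_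
  · rw [flipAt, Function.update_self, siteSign_neg_right, spin]
  · rw [flipAt, Function.update_of_ne hij]

lemma neg_one_pow_mCount_flipAt_left (μ ν : Config N) (j : ZMod N) :
    (-1 : ℂ) ^ mCount (flipAt μ j) ν = -spin ν j * (-1 : ℂ) ^ mCount μ ν := by
  simp only [neg_one_pow_mCount]
  refine prod_eq_mul_prod_of_eq_on_ne j ?_ fun i hij => ?_
  · rw [flipAt, Function.update_self, siteSign_neg_left, spin]
  · rw [flipAt, Function.update_of_ne hij]

end SignKernel

section Pauli

variable {N : ℕ}

lemma flipAt_involutive (j : ZMod N) : Function.Involutive fun μ : Config N => flipAt μ j :=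
  fun μ => by simp [flipAt]

lemma spin_flipAt_self (μ : Config N) (j : ZMod N) : spin (flipAt μ j) j = -spin μ j := by
  simp [spin, flipAt]

lemma spin_flipAt_of_ne (μ : Config N) {i j : ZMod N} (h : i ≠ j) :
    spin (flipAt μ j) i = spin μ i := by
  simp [spin, flipAt, h]

/-- The Pauli matrix `σˣ` acting on the spin at site `j`. -/
def pauliX (j : ZMod N) : Module.End ℂ (StateSpace N) :=
  LinearMap.funLeft ℂ ℂ fun μ => flipAt μ j

/-- The Pauli matrix `σᶻ` acting on the spin at site `j`. -/
def pauliZ (j : ZMod N) : Module.End ℂ (StateSpace N) :=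
  LinearMap.mulLeft ℂ fun μ => spin μ j

@[simp]
lemma pauliX_apply (j : ZMod N) (Ψ : StateSpace N) (μ : Config N) :
    pauliX j Ψ μ = Ψ (flipAt μ j) := rfl

@[simp]
lemma pauliZ_apply (j : ZMod N) (Ψ : StateSpace N) (μ : Config N) :
    pauliZ j Ψ μ = spin μ j * Ψ μ := rfl

lemma pauliX_mul_self (j : ZMod N) : pauliX j * pauliX j = 1 := by
  ext1 Ψ
  funext μ
  exact congrArg Ψ (flipAt_involutive j μ)

lemma semiconjBy_pauliX_pauliZ_self (j : ZMod N) :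
    SemiconjBy (pauliX j) (pauliZ j) (-pauliZ j) := by
  refine LinearMap.ext fun Ψ => funext fun μ => ?_
  simp [spin_flipAt_self]

lemma commute_pauliX_pauliZ_of_ne {i j : ZMod N} (h : i ≠ j) :
    Commute (pauliX i) (pauliZ j) := by
  refine LinearMap.ext fun Ψ => funext fun μ => ?_
  simp [spin_flipAt_of_ne μ h.symm]

/- The case `i = j` is needed because `j + 1 = j` when `N = 1`. -/
lemma commute_pauliX_mul_pauliX_pauliZ_mul_pauliZ (i j : ZMod N) :
    Commute (pauliX i * pauliX j) (pauliZ i * pauliZ j) := by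
  rcases eq_or_ne i j with rfl | h
  · rw [pauliX_mul_self]
    exact Commute.one_left _
  · exact commute_mul_mul_of_anticommute (semiconjBy_pauliX_pauliZ_self i)
      (commute_pauliX_pauliZ_of_ne h) (commute_pauliX_pauliZ_of_ne h.symm)
      (semiconjBy_pauliX_pauliZ_self j)

/-- The interaction of the spins at sites `i` and `j` in the XYZ chain. Its `y`-part is written
in terms of `σˣ` and `σᶻ` through `σʸ = i σˣ σᶻ`, which makes `σʸᵢ σʸⱼ = -σᶻᵢ σᶻⱼ σˣᵢ σˣⱼ` for
`i ≠ j`. -/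
noncomputable def xyzBond (Jx Jy Jz : ℂ) (i j : ZMod N) : Module.End ℂ (StateSpace N) :=
  Jx • (pauliX i * pauliX j) - Jy • (pauliZ i * pauliZ j * (pauliX i * pauliX j))
    + Jz • (pauliZ i * pauliZ j)

end Pauli

section Rotation

variable {N : ℕ} [NeZero N]

variable (N) in
/-- The rotation `Ry` of every spin by `π/2` about the `y`-axis, as a linear operator. -/
noncomputable def rotationY : Module.End ℂ (StateSpace N) where
  toFun := Ry N
  map_add' Ψ Φ := by
    funext μ
    simp only [Ry, Pi.add_apply, mul_add, sum_add_distrib]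
  map_smul' c Ψ := by
    funext μ
    simp only [Ry, Pi.smul_apply, smul_eq_mul, RingHom.id_apply, mul_left_comm _ c, ← mul_sum]

@[simp]
lemma rotationY_apply (Ψ : StateSpace N) : rotationY N Ψ = Ry N Ψ := rfl

lemma semiconjBy_rotationY_pauliX (j : ZMod N) :
    SemiconjBy (rotationY N) (pauliX j) (pauliZ j) := by
  refine LinearMap.ext fun Ψ => funext fun μ => ?_
  have hsum : ∑ ν, (-1 : ℂ) ^ mCount μ ν * Ψ (flipAt ν j)
      = spin μ j * ∑ ν, (-1 : ℂ) ^ mCount μ ν * Ψ ν :=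
    calc ∑ ν, (-1 : ℂ) ^ mCount μ ν * Ψ (flipAt ν j)
        = ∑ ν, (-1 : ℂ) ^ mCount μ (flipAt ν j) * Ψ (flipAt (flipAt ν j) j) :=
          ((flipAt_involutive j).bijective.sum_comp _).symm
      _ = ∑ ν, (-1 : ℂ) ^ mCount μ (flipAt ν j) * Ψ ν := by
          simp only [flipAt_involutive j _]
      _ = spin μ j * ∑ ν, (-1 : ℂ) ^ mCount μ ν * Ψ ν := by
          simp only [neg_one_pow_mCount_flipAt_right, mul_assoc, mul_sum]
  simp only [Module.End.mul_apply, rotationY_apply, pauliZ_apply, Ry, pauliX_apply, hsum]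
  ring

lemma semiconjBy_rotationY_pauliZ (j : ZMod N) :
    SemiconjBy (rotationY N) (pauliZ j) (-pauliX j) := by
  refine LinearMap.ext fun Ψ => funext fun μ => ?_
  simp only [Module.End.mul_apply, rotationY_apply, pauliZ_apply, Ry, LinearMap.neg_apply,
    Pi.neg_apply, pauliX_apply, neg_one_pow_mCount_flipAt_left, ← mul_neg, ← sum_neg_distrib]
  refine congrArg _ (sum_congr rfl fun ν _ => ?_)
  ring

end Rotation

section Hamiltonian

variable {N : ℕ} [NeZero N]

lemma Hxyz_eq_sum_xyzBond (Jx Jy Jz : ℝ) (Ψ : StateSpace N) :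
    Hxyz N Jx Jy Jz Ψ = (-(1 / 2 : ℂ) • ∑ j : ZMod N, xyzBond Jx Jy Jz j (j + 1)) Ψ := by
  funext μ
  simp [Hxyz, xyzBond, flipPair, LinearMap.sum_apply, sub_mul, mul_assoc]

lemma semiconjBy_rotationY_xyzBond (Jx Jy Jz : ℂ) (i j : ZMod N) :
    SemiconjBy (rotationY N) (xyzBond Jx Jy Jz i j) (xyzBond Jz Jy Jx i j) := by
  have hX : SemiconjBy (rotationY N) (pauliX i * pauliX j) (pauliZ i * pauliZ j) :=
    (semiconjBy_rotationY_pauliX i).mul_right (semiconjBy_rotationY_pauliX j)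
  have hZ : SemiconjBy (rotationY N) (pauliZ i * pauliZ j) (pauliX i * pauliX j) :=
    semiconjBy_mul_of_neg (semiconjBy_rotationY_pauliZ i) (semiconjBy_rotationY_pauliZ j)
  have hZX : SemiconjBy (rotationY N) (pauliZ i * pauliZ j * (pauliX i * pauliX j))
      (pauliZ i * pauliZ j * (pauliX i * pauliX j)) := by
    rw [SemiconjBy, (hZ.mul_right hX).eq, (commute_pauliX_mul_pauliX_pauliZ_mul_pauliZ i j).eq]
  simp only [SemiconjBy, xyzBond, mul_add, mul_sub, add_mul, sub_mul, mul_smul_comm,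
    smul_mul_assoc, hX.eq, hZ.eq, hZX.eq]
  abel

lemma Ry_comp_Hxyz (Jx Jy Jz : ℝ) : Ry N ∘ Hxyz N Jx Jy Jz = Hxyz N Jz Jy Jx ∘ Ry N := by
  have h : SemiconjBy (rotationY N) (-(1 / 2 : ℂ) • ∑ j : ZMod N, xyzBond Jx Jy Jz j (j + 1))
      (-(1 / 2 : ℂ) • ∑ j : ZMod N, xyzBond Jz Jy Jx j (j + 1)) := by
    simp only [SemiconjBy, mul_smul_comm, smul_mul_assoc, mul_sum, sum_mul,
      (semiconjBy_rotationY_xyzBond _ _ _ _ _).eq]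
  funext Ψ
  simp only [Function.comp_apply, Hxyz_eq_sum_xyzBond]
  exact LinearMap.congr_fun h.eq Ψ

lemma smul_Hxyz (c Jx Jy Jz : ℝ) :
    (c : ℂ) • Hxyz N Jx Jy Jz = Hxyz N (c * Jx) (c * Jy) (c * Jz) := by
  funext Ψ μ
  simp only [Hxyz, Pi.smul_apply, smul_eq_mul, Complex.ofReal_mul, mul_left_comm (c : ℂ), mul_sum]
  refine sum_congr rfl fun j _ => ?_
  ring

end Hamiltonian

/-- `Rʸ ∘ H(α) = ((α−1)²/4) · H((α+3)/(α−1)) ∘ Rʸ` for `α ≠ 1`. -/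
theorem Ry_conjugates_H (N : ℕ) [NeZero N] (α : ℝ) (hα : α ≠ 1) :
    Ry N ∘ Halpha N α
      = (((α - 1) ^ 2 / 4 : ℝ) : ℂ) • (Halpha N ((α + 3) / (α - 1)) ∘ Ry N) := by
  have h : α - 1 ≠ 0 := sub_ne_zero.mpr hα
  have hcouplings : Hxyz N ((α ^ 2 - 1) / 2) (1 - α) (1 + α)
      = (((α - 1) ^ 2 / 4 : ℝ) : ℂ) • Halpha N ((α + 3) / (α - 1)) := by
    rw [Halpha, smul_Hxyz]
    congr 1 <;> field_simp <;> ring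
  calc Ry N ∘ Halpha N α = Hxyz N ((α ^ 2 - 1) / 2) (1 - α) (1 + α) ∘ Ry N := Ry_comp_Hxyz _ _ _
    _ = (((α - 1) ^ 2 / 4 : ℝ) : ℂ) • (Halpha N ((α + 3) / (α - 1)) ∘ Ry N) := by
      rw [hcouplings]
      rfl
end

section
/- Let N = 3 and α ∈ ℝ. Define Ψ : {−1,+1}³ → ℂ by Ψ(−,−,−) = α, Ψ(−,+,+) = Ψ(+,−,+) = Ψ(+,+,−) = 1, and Ψ(μ) = 0 for all other configurations μ. Then H(α) Ψ = −(3/4)(3+α²) · Ψ, and moreover S Ψ = Ψ for the cyclic shift operator S. -/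
open Finset

/-- The cyclic shift operator: `(S Ψ)(μ) = Ψ(j ↦ μ_{j+1})`. -/
def shift (N : ℕ) (Ψ : StateSpace N) : StateSpace N :=
  fun μ => Ψ (fun j => μ (j + 1))

/-- The `N = 3` eigenvector: `Ψ(−,−,−) = α`, `Ψ(−,+,+) = Ψ(+,−,+) = Ψ(+,+,−) = 1`,
and `Ψ = 0` on all other configurations. -/
noncomputable def Psi3 (α : ℝ) : StateSpace 3 := fun μ =>
  if μ 0 = -1 ∧ μ 1 = -1 ∧ μ 2 = -1 then (α : ℂ)
  else if (μ 0 = -1 ∧ μ 1 = 1 ∧ μ 2 = 1) ∨ (μ 0 = 1 ∧ μ 1 = -1 ∧ μ 2 = 1)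
      ∨ (μ 0 = 1 ∧ μ 1 = 1 ∧ μ 2 = -1) then 1
  else 0

/-! The XYZ Hamiltonian commutes with the cyclic shift and preserves the parity `∏ j, μ j`. A
shift-invariant state on three sites supported on odd parity is determined by its values at
`↓↓↓` and `↓↑↑`, so the Hamiltonian acts on such states by a `2 × 2` block. The vector `(α, 1)` is
an eigenvector of this block when its couplings satisfy
`(Jx - Jy) (3 - α²) = 2 (Jx + Jy - 2 Jz) α`, which is an identity in `α` for those of `H(α)`. -/

section AnyLength

variable {N : ℕ}

lemma flipAt_comp_add_one (μ : Config N) (j : ZMod N) :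
    flipAt (fun i => μ (i + 1)) j = fun i => flipAt μ (j + 1) (i + 1) := by
  ext i
  simp [flipAt, Function.update_apply]

lemma flipPair_comp_add_one (μ : Config N) (j : ZMod N) :
    flipPair (fun i => μ (i + 1)) j = fun i => flipPair μ (j + 1) (i + 1) := by
  simp only [flipPair, flipAt_comp_add_one]

lemma prod_flipAt [NeZero N] (μ : Config N) (j : ZMod N) :
    ∏ i, flipAt μ j i = -∏ i, μ i := by
  rw [flipAt, prod_update_of_mem (mem_univ j), neg_mul, ← erase_eq,
    mul_prod_erase univ μ (mem_univ j)]

lemma prod_flipPair [NeZero N] (μ : Config N) (j : ZMod N) :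
    ∏ i, flipPair μ j i = ∏ i, μ i := by
  rw [flipPair, prod_flipAt, prod_flipAt, neg_neg]

lemma shift_smul (c : ℂ) (Ψ : StateSpace N) : shift N (c • Ψ) = c • shift N Ψ := rfl

lemma Hxyz_shift [NeZero N] (Jx Jy Jz : ℝ) (Ψ : StateSpace N) :
    Hxyz N Jx Jy Jz (shift N Ψ) = shift N (Hxyz N Jx Jy Jz Ψ) := by
  ext μ
  simp only [Hxyz, shift, flipPair_comp_add_one, spin]
  congr 1
  exact (Equiv.sum_comp (Equiv.addRight (1 : ZMod N)) _).symm

lemma Hxyz_apply_eq_zero_of_parity [NeZero N] (Jx Jy Jz : ℝ) {Ψ : StateSpace N} {ε : ℤˣ}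
    (hΨ : ∀ μ, ∏ i, μ i = ε → Ψ μ = 0) {μ : Config N} (hμ : ∏ i, μ i = ε) :
    Hxyz N Jx Jy Jz Ψ μ = 0 := by
  have hflip (j : ZMod N) : Ψ (flipPair μ j) = 0 := hΨ _ ((prod_flipPair μ j).trans hμ)
  simp [Hxyz, hflip, hΨ μ hμ]

lemma apply_flipAt_one_eq_of_shift_eq [NeZero N] {Ψ : StateSpace N} (hΨ : shift N Ψ = Ψ)
    (j : ZMod N) : Ψ (flipAt 1 j) = Ψ (flipAt 1 0) := by
  have succ (k : ZMod N) : Ψ (flipAt 1 (k + 1)) = Ψ (flipAt 1 k) := by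
    calc Ψ (flipAt 1 (k + 1))
        = shift N Ψ (flipAt 1 (k + 1)) := by rw [hΨ]
      _ = Ψ (flipAt 1 k) := congrArg Ψ (flipAt_comp_add_one 1 k).symm
  rw [← ZMod.natCast_zmod_val j]
  induction j.val with
  | zero => rw [Nat.cast_zero]
  | succ n ih => rw [Nat.cast_succ, succ, ih]

end AnyLength

section ThreeSites

lemma eq_neg_one_or_exists_eq_flipAt_one {μ : Config 3} (hμ : ∏ i, μ i = -1) :
    μ = -1 ∨ ∃ j, μ = flipAt 1 j := by
  revert μ
  decide

lemma ext_of_shift_eq_of_parity {Φ Ψ : StateSpace 3} (hΦ : shift 3 Φ = Φ) (hΨ : shift 3 Ψ = Ψ)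
    (hΦ_even : ∀ μ, ∏ i, μ i = 1 → Φ μ = 0) (hΨ_even : ∀ μ, ∏ i, μ i = 1 → Ψ μ = 0)
    (h_down : Φ (-1) = Ψ (-1)) (h_flip : Φ (flipAt 1 0) = Ψ (flipAt 1 0)) : Φ = Ψ := by
  ext μ
  obtain h_even | h_odd := Int.units_eq_one_or (∏ i, μ i)
  · rw [hΦ_even μ h_even, hΨ_even μ h_even]
  · obtain rfl | ⟨j, rfl⟩ := eq_neg_one_or_exists_eq_flipAt_one h_odd
    · exact h_down
    · rw [apply_flipAt_one_eq_of_shift_eq hΦ, apply_flipAt_one_eq_of_shift_eq hΨ, h_flip]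

lemma Hxyz_apply_neg_one_of_shift_eq (Jx Jy Jz : ℝ) {Ψ : StateSpace 3} (hΨ : shift 3 Ψ = Ψ) :
    Hxyz 3 Jx Jy Jz Ψ (-1) =
      -(3 / 2) * ((Jx - Jy) * Ψ (flipAt 1 0) + Jz * Ψ (-1)) := by
  have hflip : ∀ j : ZMod 3, flipPair (-1) j = flipAt 1 (j + 2) := by decide
  simp only [Hxyz, hflip, apply_flipAt_one_eq_of_shift_eq hΨ, spin, Pi.neg_apply, Pi.one_apply,
    sum_const, card_univ, ZMod.card, nsmul_eq_mul]
  push_cast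
  ring

lemma Hxyz_apply_flipAt_one_of_shift_eq (Jx Jy Jz : ℝ) {Ψ : StateSpace 3}
    (hΨ : shift 3 Ψ = Ψ) :
    Hxyz 3 Jx Jy Jz Ψ (flipAt 1 0) =
      -(1 / 2) * ((2 * (Jx + Jy) - Jz) * Ψ (flipAt 1 0) + (Jx - Jy) * Ψ (-1)) := by
  have flip₀ : flipPair (flipAt 1 0) 0 = flipAt (1 : Config 3) 1 := by decide
  have flip₁ : flipPair (flipAt 1 0) 1 = (-1 : Config 3) := by decide
  have flip₂ : flipPair (flipAt 1 0) 2 = flipAt (1 : Config 3) 2 := by decide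
  have spin₀ : spin (flipAt (1 : Config 3) 0) 0 = -1 := by simp [spin, flipAt]
  have spin₁ : spin (flipAt (1 : Config 3) 0) 1 = 1 := by simp [spin, flipAt]
  have spin₂ : spin (flipAt (1 : Config 3) 0) 2 = 1 := by
    simp [spin, flipAt, Function.update_of_ne (show (2 : ZMod 3) ≠ 0 by decide)]
  have sum_three (f : ZMod 3 → ℂ) : ∑ j, f j = f 0 + f 1 + f 2 := Fin.sum_univ_three f
  simp only [Hxyz, sum_three, show (0 + 1 : ZMod 3) = 1 from rfl,
    show (1 + 1 : ZMod 3) = 2 from rfl, show (2 + 1 : ZMod 3) = 0 from rfl, flip₀, flip₁, flip₂,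
    spin₀, spin₁, spin₂, apply_flipAt_one_eq_of_shift_eq hΨ 1,
    apply_flipAt_one_eq_of_shift_eq hΨ 2]
  ring

lemma Psi3_neg_one (α : ℝ) : Psi3 α (-1) = α := by
  simp [Psi3]

lemma Psi3_flipAt_one (α : ℝ) (j : ZMod 3) : Psi3 α (flipAt 1 j) = 1 := by
  rw [Psi3, if_neg (by decide +revert), if_pos (by decide +revert)]

lemma Psi3_eq_zero_of_prod_eq_one (α : ℝ) {μ : Config 3} (hμ : ∏ i, μ i = 1) :
    Psi3 α μ = 0 := by
  rw [Psi3, if_neg (by decide +revert), if_neg (by decide +revert)]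

lemma shift_Psi3 (α : ℝ) : shift 3 (Psi3 α) = Psi3 α := by
  ext μ
  simp only [shift, Psi3, show (0 + 1 : ZMod 3) = 1 from rfl, show (1 + 1 : ZMod 3) = 2 from rfl,
    show (2 + 1 : ZMod 3) = 0 from rfl]
  congr 1
  · grind
  · grind

theorem psi3_eigenvector_general {Jx Jy Jz α : ℝ}
    (hα : (Jx - Jy) * (3 - α ^ 2) = 2 * (Jx + Jy - 2 * Jz) * α) :
    Hxyz 3 Jx Jy Jz (Psi3 α) =
        ((-(1 / 2) * (2 * (Jx + Jy) + (Jx - Jy) * α - Jz) : ℝ) : ℂ) • Psi3 α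
      ∧ shift 3 (Psi3 α) = Psi3 α := by
  have h_shift := shift_Psi3 α
  have h_even (μ : Config 3) (hμ : ∏ i, μ i = 1) : Psi3 α μ = 0 :=
    Psi3_eq_zero_of_prod_eq_one α hμ
  refine ⟨ext_of_shift_eq_of_parity ?_ ?_ ?_ ?_ ?_ ?_, h_shift⟩
  · rw [← Hxyz_shift, h_shift]
  · rw [shift_smul, h_shift]
  · exact fun μ => Hxyz_apply_eq_zero_of_parity Jx Jy Jz h_even
  · intro μ hμ
    rw [Pi.smul_apply, h_even μ hμ, smul_zero]
  · rw [Hxyz_apply_neg_one_of_shift_eq _ _ _ h_shift, Pi.smul_apply, Psi3_neg_one,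
      Psi3_flipAt_one, smul_eq_mul]
    have hα_complex : ((Jx : ℂ) - Jy) * (3 - α ^ 2) = 2 * (Jx + Jy - 2 * Jz) * α := by
      exact_mod_cast hα
    push_cast
    linear_combination (-1 / 2 : ℂ) * hα_complex
  · rw [Hxyz_apply_flipAt_one_of_shift_eq _ _ _ h_shift, Pi.smul_apply, Psi3_neg_one,
      Psi3_flipAt_one, smul_eq_mul]
    push_cast
    ring

end ThreeSites

/-- For `N = 3`, the displayed vector is an eigenvector of `H(α)` with eigenvalue
`−(3/4)(3+α²)`, and it is invariant under the cyclic shift. -/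
theorem psi3_eigenvector (α : ℝ) :
    Halpha 3 α (Psi3 α) = ((-(3 / 4) * (3 + α ^ 2) : ℝ) : ℂ) • Psi3 α
      ∧ shift 3 (Psi3 α) = Psi3 α := by
  have h_eigenvalue : -(3 / 4) * (3 + α ^ 2) = -(1 / 2) *
      (2 * ((1 + α) + (1 - α)) + ((1 + α) - (1 - α)) * α - (α ^ 2 - 1) / 2) := by ring
  exact h_eigenvalue ▸ psi3_eigenvector_general (by ring)
end

section
/- Let N be odd, α ∈ ℝ with α ≠ 1, and set α' = (α+3)/(α−1). Suppose v, w ∈ V_N are nonzero vectors such that H(α) v = E(α) v, H(α') w = E(α') w, both v(μ) = 0 and w(μ) = 0 whenever n₊(μ) is odd, w(−) ≠ 0 where (−) is the all-minus configuration, and the eigenspace {u ∈ V_N : H(α') u = E(α') u} has complex dimension exactly 2. Then the quadratic sum rule 2^{N−1} · w(−)² · Σ_μ v(μ)² = (Σ_μ v(μ))² · Σ_μ w(μ)² holds, where all sums run over all 2^N configurations. -/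
open Finset

/-- `n₊(μ)`: the number of sites `j` with `μ_j = +1`. -/
def nPlus {N : ℕ} [NeZero N] (μ : Config N) : ℕ :=
  (Finset.univ.filter (fun j => μ j = 1)).card

/-- `E(α) = −(N/4)(3 + α²)`. -/
noncomputable def Eval (N : ℕ) (α : ℝ) : ℝ := -(N / 4 : ℝ) * (3 + α ^ 2)

/-- `H(α)` as a linear operator on `V_N`. -/
noncomputable def HalphaL (N : ℕ) [NeZero N] (α : ℝ) : Module.End ℂ (StateSpace N) :=
  HxyzL N (1 + α) (1 - α) ((α ^ 2 - 1) / 2)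

/-!
The eigenvalue problems at `α` and `α' = (α + 3) / (α - 1)` are related by a rotation exchanging the
`x` and `z` axes: the couplings satisfy `(J_x, J_y, J_z)(α') = 4 / (α - 1)² • (J_z, J_y, J_x)(α)`,
and `E` scales by the same factor. On the state space the rotation is a Walsh transform `W` with
`W² = 2 ^ N`, so `W v` lies in the two-dimensional eigenspace at `α'`.

As `N` is odd, the global spin flip exchanges the parities of `n₊`; hence `w` and its flip have
disjoint supports and span that eigenspace. Since `v` is supported on even `n₊`, `W v` is invariant
under the flip, so it is a multiple `a` of the sum of `w` and its flip. Evaluating at the all-minus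
configuration gives `∑ v = a w(−)`, and comparing sums of squares gives
`2 ^ N ∑ v² = 2 a² ∑ w²`.
-/

section FlipInvariant

variable {K X : Type*} [Field K]

theorem span_pair_eq_of_finrank_eq_two {M : Type*} [AddCommGroup M] [Module K M]
    {E : Submodule K M} (hE : Module.finrank K E = 2) {x y : M} (hx : x ∈ E) (hy : y ∈ E)
    (hli : LinearIndependent K ![x, y]) : Submodule.span K {x, y} = E := by
  have : FiniteDimensional K E := Module.finite_of_finrank_eq_succ hE
  refine Submodule.eq_of_le_of_finrank_eq (Submodule.span_le.mpr (Set.pair_subset hx hy)) ?_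
  rw [hE, ← Matrix.range_cons_cons_empty x y ![], finrank_span_eq_card hli, Fintype.card_fin]

theorem linearIndependent_pair_comp {σ : X → X} {x : X} (hσ : σ (σ x) = x) {w : X → K}
    (hwx : w x ≠ 0) (hwσx : w (σ x) = 0) : LinearIndependent K ![w, w ∘ σ] := by
  refine LinearIndependent.pair_iff.mpr fun s t hst => ?_
  have at_x : s * w x = 0 := by simpa [hwσx] using congrFun hst x
  have at_σx : t * w x = 0 := by simpa [hσ, hwσx] using congrFun hst (σ x)
  exact ⟨(mul_eq_zero_iff_right hwx).mp at_x, (mul_eq_zero_iff_right hwx).mp at_σx⟩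

theorem exists_eq_smul_add_comp_of_finrank_eq_two {E : Submodule K (X → K)}
    (hE : Module.finrank K E = 2) {σ : X → X} {x : X} (hσ : σ (σ x) = x) {w : X → K}
    (hw : w ∈ E) (hwσ : w ∘ σ ∈ E) (hwx : w x ≠ 0) (hwσx : w (σ x) = 0) {u : X → K}
    (hu : u ∈ E) (huσ : u (σ x) = u x) :
    ∃ a : K, u = a • (w + w ∘ σ) := by
  rw [← span_pair_eq_of_finrank_eq_two hE hw hwσ (linearIndependent_pair_comp hσ hwx hwσx),
    Submodule.mem_span_pair] at hu
  obtain ⟨a, b, rfl⟩ := hu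
  obtain rfl : b = a := mul_right_cancel₀ hwx (by simpa [hσ, hwσx] using huσ)
  exact ⟨b, (smul_add b w (w ∘ σ)).symm⟩

theorem sum_add_comp_sq {R : Type*} [CommSemiring R] [Fintype X] (σ : Equiv.Perm X) {w : X → R}
    (hw : ∀ x, w x * w (σ x) = 0) : ∑ x, (w x + w (σ x)) ^ 2 = 2 * ∑ x, w x ^ 2 :=
  calc ∑ x, (w x + w (σ x)) ^ 2 = ∑ x, (w x ^ 2 + w (σ x) ^ 2) :=
        Finset.sum_congr rfl fun x _ => by rw [add_sq, mul_assoc, hw, mul_zero, add_zero]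
    _ = 2 * ∑ x, w x ^ 2 := by
        rw [Finset.sum_add_distrib, Equiv.sum_comp σ (w · ^ 2), two_mul]

end FlipInvariant

section Walsh

/-- The `2 × 2` Hadamard matrix indexed by signs, with entry `-1` at `(+1, +1)` and `+1` elsewhere:
up to a factor `√2`, the single-spin rotation exchanging the `x` and `z` axes. -/
def signHadamard (R : Type*) [Ring R] : Matrix ℤˣ ℤˣ R :=
  Matrix.of fun a b => if a = 1 ∧ b = 1 then -1 else 1

/-- The Walsh matrix on spin configurations: the tensor power of `signHadamard` over the sites. -/
def walshMatrix (ι R : Type*) [Fintype ι] [CommRing R] : Matrix (ι → ℤˣ) (ι → ℤˣ) R :=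
  Matrix.of fun μ ν => ∏ j, signHadamard R (μ j) (ν j)

/-- The unnormalised Walsh transform, the linear map given by `walshMatrix`. -/
def walsh (ι R : Type*) [Fintype ι] [DecidableEq ι] [CommRing R] :
    Module.End R ((ι → ℤˣ) → R) :=
  (walshMatrix ι R).mulVecLin

variable {ι R : Type*}

theorem signHadamard_neg_left [Ring R] (a b : ℤˣ) :
    signHadamard R (-a) b = -((b : ℤ) : R) * signHadamard R a b := by
  rcases Int.units_eq_one_or a with rfl | rfl <;> rcases Int.units_eq_one_or b with rfl | rfl <;>
    simp [signHadamard]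

theorem sum_signHadamard_mul_signHadamard [Ring R] (a c : ℤˣ) :
    ∑ b, signHadamard R a b * signHadamard R b c = if a = c then 2 else 0 := by
  rw [show (univ : Finset ℤˣ) = {1, -1} from rfl, Finset.sum_pair (by decide)]
  rcases Int.units_eq_one_or a with rfl | rfl <;> rcases Int.units_eq_one_or c with rfl | rfl <;>
    simp [signHadamard, one_add_one_eq_two]

variable [Fintype ι] [CommRing R]

theorem walshMatrix_isSymm : (walshMatrix ι R).IsSymm :=
  Matrix.IsSymm.ext fun _ _ => by simp only [walshMatrix, signHadamard, Matrix.of_apply, and_comm]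

theorem walshMatrix_neg_one_left (ν : ι → ℤˣ) : walshMatrix ι R (-1) ν = 1 := by
  simp [walshMatrix, signHadamard]

theorem walshMatrix_neg_left (μ ν : ι → ℤˣ) :
    walshMatrix ι R (-μ) ν = (-1) ^ #{j | ν j = 1} * walshMatrix ι R μ ν := by
  have neg_spin (j : ι) : -((ν j : ℤ) : R) = if ν j = 1 then -1 else 1 := by
    rcases Int.units_eq_one_or (ν j) with h | h <;> simp [h]
  simp only [walshMatrix, Matrix.of_apply, Pi.neg_apply, signHadamard_neg_left,
    Finset.prod_mul_distrib, neg_spin, Finset.prod_ite, Finset.prod_const, one_pow, mul_one]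

variable [DecidableEq ι]

theorem walshMatrix_update_neg_left (μ ν : ι → ℤˣ) (j : ι) :
    walshMatrix ι R (Function.update μ j (-μ j)) ν = -((ν j : ℤ) : R) * walshMatrix ι R μ ν := by
  simp only [walshMatrix, Matrix.of_apply]
  rw [← Finset.mul_prod_erase univ _ (Finset.mem_univ j),
    ← Finset.mul_prod_erase univ (fun k => signHadamard R (μ k) (ν k)) (Finset.mem_univ j),
    Function.update_self, signHadamard_neg_left, mul_assoc]
  congr 2
  refine Finset.prod_congr rfl fun k hk => ?_
  rw [Function.update_of_ne (Finset.ne_of_mem_erase hk)]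

theorem walshMatrix_mul_self :
    walshMatrix ι R * walshMatrix ι R = (2 ^ Fintype.card ι : R) • 1 := by
  ext μ ξ
  simp only [Matrix.mul_apply, walshMatrix, Matrix.of_apply, ← Finset.prod_mul_distrib,
    ← Fintype.prod_sum (fun j b => signHadamard R (μ j) b * signHadamard R b (ξ j)),
    sum_signHadamard_mul_signHadamard, Fintype.prod_ite_zero, Finset.prod_const,
    Finset.card_univ, Matrix.smul_apply, Matrix.one_apply, funext_iff, smul_eq_mul, mul_ite,
    mul_one, mul_zero]

theorem walsh_apply (v : (ι → ℤˣ) → R) (μ : ι → ℤˣ) :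
    walsh ι R v μ = ∑ ν, walshMatrix ι R μ ν * v ν :=
  rfl

theorem walsh_mul_self : walsh ι R * walsh ι R = (2 ^ Fintype.card ι : R) • 1 := by
  rw [walsh, Module.End.mul_eq_comp, ← Matrix.mulVecLin_mul, walshMatrix_mul_self]
  ext; simp

theorem walsh_neg_one (v : (ι → ℤˣ) → R) : walsh ι R v (-1) = ∑ ν, v ν := by
  simp only [walsh_apply, walshMatrix_neg_one_left, one_mul]

theorem walsh_neg_of_even {v : (ι → ℤˣ) → R} (hv : ∀ ν, Odd #{j | ν j = 1} → v ν = 0)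
    (μ : ι → ℤˣ) : walsh ι R v (-μ) = walsh ι R v μ := by
  simp only [walsh_apply]
  refine Finset.sum_congr rfl fun ν _ => ?_
  rcases Nat.even_or_odd #{j | ν j = 1} with h | h
  · rw [walshMatrix_neg_left, h.neg_one_pow, one_mul]
  · simp only [hv ν h, mul_zero]

theorem sum_walsh_sq (v : (ι → ℤˣ) → R) :
    ∑ μ, walsh ι R v μ ^ 2 = 2 ^ Fintype.card ι * ∑ ν, v ν ^ 2 := by
  have dotProduct_walsh : walsh ι R v ⬝ᵥ walsh ι R v = (walsh ι R * walsh ι R) v ⬝ᵥ v := by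
    simp only [walsh, Module.End.mul_apply, Matrix.mulVecLin_apply, Matrix.dotProduct_mulVec]
    rw [← Matrix.mulVec_transpose, walshMatrix_isSymm.eq]
  simpa [walsh_mul_self, dotProduct, sq, Finset.mul_sum, mul_assoc] using dotProduct_walsh

theorem sum_sq_of_walsh_eq_smul_add_comp_neg {v w : (ι → ℤˣ) → R} {a : R}
    (hv : walsh ι R v = a • (w + w ∘ Neg.neg)) (hw : ∀ μ, w μ * w (-μ) = 0) :
    2 ^ Fintype.card ι * ∑ μ, v μ ^ 2 = 2 * a ^ 2 * ∑ μ, w μ ^ 2 :=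
  calc 2 ^ Fintype.card ι * ∑ μ, v μ ^ 2 = ∑ μ, walsh ι R v μ ^ 2 := (sum_walsh_sq v).symm
    _ = a ^ 2 * ∑ μ, (w μ + w (-μ)) ^ 2 := by
      simp only [hv, Pi.smul_apply, Pi.add_apply, Function.comp_apply, smul_eq_mul, mul_pow,
        Finset.mul_sum]
    _ = a ^ 2 * (2 * ∑ μ, w μ ^ 2) := congrArg _ (sum_add_comp_sq (Equiv.neg _) hw)
    _ = 2 * a ^ 2 * ∑ μ, w μ ^ 2 := by ring

end Walsh

section Intertwining

theorem semiconjBy_sum_right {ι R : Type*} [Fintype ι] [NonUnitalNonAssocSemiring R] {a : R}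
    {f g : ι → R} (h : ∀ i, SemiconjBy a (f i) (g i)) : SemiconjBy a (∑ i, f i) (∑ i, g i) := by
  rw [SemiconjBy, Finset.mul_sum, Finset.sum_mul]
  exact Finset.sum_congr rfl fun i _ => (h i).eq

theorem mem_eigenspace_of_semiconjBy {R M : Type*} [CommRing R] [AddCommGroup M] [Module R M]
    {W A B : Module.End R M} (h : SemiconjBy W A B) {c : R} {v : M}
    (hv : v ∈ Module.End.eigenspace A c) : W v ∈ Module.End.eigenspace B c := by
  rw [Module.End.mem_eigenspace_iff] at hv ⊢
  rw [← Module.End.mul_apply, ← h.eq, Module.End.mul_apply, hv, map_smul]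

end Intertwining

section BondOperators

variable {N : ℕ}

theorem spin_mul_self (μ : Config N) (j : ZMod N) : spin μ j * spin μ j = 1 := by
  rcases Int.units_eq_one_or (μ j) with h | h <;> simp [spin, h]

theorem spin_flipAt (μ : Config N) (i j : ZMod N) :
    spin (flipAt μ i) j = if j = i then -spin μ j else spin μ j := by
  split_ifs with h
  · subst h; simp [spin, flipAt]
  · simp [spin, flipAt, h]

theorem spin_flipPair_mul (μ : Config N) (j : ZMod N) :
    spin (flipPair μ j) j * spin (flipPair μ j) (j + 1) = spin μ j * spin μ (j + 1) := by
  by_cases h : j = j + 1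
  · simp only [← h, spin_mul_self]
  · simp [flipPair, spin_flipAt, h, Ne.symm h]

/-- The bond operator `σˣ_j σˣ_{j+1}`, which flips the spins at both ends of the bond. -/
def bondX (j : ZMod N) : Module.End ℂ (StateSpace N) :=
  LinearMap.funLeft ℂ ℂ fun μ => flipPair μ j

/-- The diagonal bond operator `σᶻ_j σᶻ_{j+1}`. -/
def bondZ (j : ZMod N) : Module.End ℂ (StateSpace N) :=
  LinearMap.mulLeft ℂ fun μ => spin μ j * spin μ (j + 1)

/-- The global spin flip on the state space, the product of `σˣ_j` over all sites. -/
def spinFlip : Module.End ℂ (StateSpace N) :=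
  LinearMap.funLeft ℂ ℂ fun μ => -μ

theorem bondX_apply (j : ZMod N) (v : StateSpace N) (μ : Config N) :
    bondX j v μ = v (flipPair μ j) :=
  rfl

theorem bondZ_apply (j : ZMod N) (v : StateSpace N) (μ : Config N) :
    bondZ j v μ = spin μ j * spin μ (j + 1) * v μ :=
  rfl

theorem commute_bondX_bondZ (j : ZMod N) : Commute (bondX j) (bondZ j) :=
  LinearMap.ext fun v => funext fun μ => by
    simp only [Module.End.mul_apply, bondX_apply, bondZ_apply, spin_flipPair_mul]

variable [NeZero N]

-- The `y` bond operator is `σʸ_j σʸ_{j+1} = -bondZ j * bondX j`.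
theorem HxyzL_eq_sum_bonds (Jx Jy Jz : ℝ) :
    HxyzL N Jx Jy Jz = (-(1 / 2) : ℂ) • ∑ j : ZMod N,
      ((Jx : ℂ) • bondX j - (Jy : ℂ) • (bondZ j * bondX j) + (Jz : ℂ) • bondZ j) :=
  LinearMap.ext fun v => funext fun μ => by
    simp only [HxyzL, Hxyz, LinearMap.coe_mk, AddHom.coe_mk, LinearMap.smul_apply,
      LinearMap.sum_apply, LinearMap.add_apply, LinearMap.sub_apply, Module.End.mul_apply,
      Pi.smul_apply, Finset.sum_apply, Pi.add_apply, Pi.sub_apply, smul_eq_mul, bondX_apply,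
      bondZ_apply]
    congr 1
    exact Finset.sum_congr rfl fun j _ => by ring

theorem HxyzL_mul (c Jx Jy Jz : ℝ) :
    HxyzL N (c * Jx) (c * Jy) (c * Jz) = (c : ℂ) • HxyzL N Jx Jy Jz := by
  simp only [HxyzL_eq_sum_bonds, smul_comm (c : ℂ), Finset.smul_sum (r := (c : ℂ)),
    Complex.ofReal_mul]
  congr 1
  exact Finset.sum_congr rfl fun j _ => by module

theorem commute_spinFlip_HxyzL (Jx Jy Jz : ℝ) : Commute spinFlip (HxyzL N Jx Jy Jz) :=
  LinearMap.ext fun v => funext fun μ => by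
    change Hxyz N Jx Jy Jz v (-μ) = Hxyz N Jx Jy Jz (fun ν => v (-ν)) μ
    simp only [Hxyz, flipPair_neg, spin_neg, mul_neg, neg_mul, neg_neg]

theorem semiconjBy_walsh_bondZ_bondX (j : ZMod N) :
    SemiconjBy (walsh (ZMod N) ℂ) (bondZ j) (bondX j) :=
  LinearMap.ext fun v => funext fun μ => by
    simp only [Module.End.mul_apply, bondX_apply, walsh_apply, bondZ_apply]
    refine Finset.sum_congr rfl fun ν _ => ?_
    simp only [flipPair, flipAt, walshMatrix_update_neg_left, spin]
    ring

theorem semiconjBy_walsh_bondX_bondZ (j : ZMod N) :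
    SemiconjBy (walsh (ZMod N) ℂ) (bondX j) (bondZ j) := by
  set W := walsh (ZMod N) ℂ
  have W_sq : W * W = (2 ^ Fintype.card (ZMod N) : ℂ) • 1 := walsh_mul_self
  refine smul_right_injective _ (pow_ne_zero (Fintype.card (ZMod N)) (two_ne_zero (α := ℂ))) ?_
  calc (2 ^ Fintype.card (ZMod N) : ℂ) • (W * bondX j)
      = W * (bondX j * W) * W := by
        rw [mul_assoc, mul_assoc, W_sq, mul_smul_one, mul_smul_comm]
    _ = W * (W * bondZ j) * W := by rw [(semiconjBy_walsh_bondZ_bondX j).eq]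
    _ = (2 ^ Fintype.card (ZMod N) : ℂ) • (bondZ j * W) := by
        rw [← mul_assoc, W_sq, smul_one_mul, smul_mul_assoc]

theorem semiconjBy_walsh_HxyzL (Jx Jy Jz : ℝ) :
    SemiconjBy (walsh (ZMod N) ℂ) (HxyzL N Jx Jy Jz) (HxyzL N Jz Jy Jx) := by
  have hX (j : ZMod N) := semiconjBy_walsh_bondX_bondZ j
  have hZ (j : ZMod N) := semiconjBy_walsh_bondZ_bondX j
  have hY (j : ZMod N) : SemiconjBy (walsh (ZMod N) ℂ) (bondZ j * bondX j) (bondZ j * bondX j) := by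
    simpa only [(commute_bondX_bondZ j).eq] using (hZ j).mul_right (hX j)
  have swap : HxyzL N Jz Jy Jx = (-(1 / 2) : ℂ) • ∑ j : ZMod N,
      ((Jx : ℂ) • bondZ j - (Jy : ℂ) • (bondZ j * bondX j) + (Jz : ℂ) • bondX j) := by
    simp only [HxyzL_eq_sum_bonds, sub_add_comm]
  rw [HxyzL_eq_sum_bonds, swap]
  exact (semiconjBy_sum_right fun j => (((hX j).smul_right _).sub_right
    ((hY j).smul_right _)).add_right ((hZ j).smul_right _)).smul_right _

end BondOperators

section CombinatorialLine

/-- The eigenspace of `H(α)` for the eigenvalue `E(α)`. The couplings of `H(α)` parametrise the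
combinatorial line `J_x J_y + J_y J_z + J_z J_x = 0` of the XYZ chain. -/
noncomputable abbrev combinatorialEigenspace (N : ℕ) [NeZero N] (α : ℝ) :
    Submodule ℂ (StateSpace N) :=
  Module.End.eigenspace (HalphaL N α) ((Eval N α : ℝ) : ℂ)

theorem Eval_dual {N : ℕ} {α : ℝ} (hα : α ≠ 1) :
    Eval N ((α + 3) / (α - 1)) = 4 / (α - 1) ^ 2 * Eval N α := by
  have : α - 1 ≠ 0 := sub_ne_zero.mpr hα
  simp only [Eval]
  field_simp
  ring

variable {N : ℕ} [NeZero N]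

theorem HalphaL_dual {α : ℝ} (hα : α ≠ 1) :
    HalphaL N ((α + 3) / (α - 1)) = ((4 / (α - 1) ^ 2 : ℝ) : ℂ) •
      HxyzL N ((α ^ 2 - 1) / 2) (1 - α) (1 + α) := by
  have : α - 1 ≠ 0 := sub_ne_zero.mpr hα
  rw [← HxyzL_mul, HalphaL]
  congr 1 <;> (field_simp; ring)

theorem walsh_mem_combinatorialEigenspace_dual {α : ℝ} (hα : α ≠ 1) {v : StateSpace N}
    (hv : v ∈ combinatorialEigenspace N α) :
    walsh (ZMod N) ℂ v ∈ combinatorialEigenspace N ((α + 3) / (α - 1)) := by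
  have walsh_eigen := mem_eigenspace_of_semiconjBy (semiconjBy_walsh_HxyzL _ _ _) hv
  rw [Module.End.mem_eigenspace_iff] at walsh_eigen ⊢
  rw [HalphaL_dual hα, Eval_dual hα, LinearMap.smul_apply, walsh_eigen, smul_smul,
    Complex.ofReal_mul]

theorem comp_neg_mem_combinatorialEigenspace {α : ℝ} {w : StateSpace N}
    (hw : w ∈ combinatorialEigenspace N α) :
    w ∘ Neg.neg ∈ combinatorialEigenspace N α :=
  mem_eigenspace_of_semiconjBy (commute_spinFlip_HxyzL _ _ _) hw

theorem nPlus_neg_add_nPlus (μ : Config N) : nPlus (-μ) + nPlus μ = N := by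
  have neg_eq_one (j : ZMod N) : (-μ) j = 1 ↔ ¬ μ j = 1 := by
    rcases Int.units_eq_one_or (μ j) with h | h <;> simp [h]
  simp only [nPlus, neg_eq_one]
  rw [add_comm, Finset.card_filter_add_card_filter_not, Finset.card_univ, ZMod.card]

theorem mul_apply_neg_eq_zero_of_even (hN : Odd N) {w : StateSpace N}
    (hw : ∀ μ, Odd (nPlus μ) → w μ = 0) (μ : Config N) : w μ * w (-μ) = 0 := by
  rcases Nat.even_or_odd (nPlus μ) with h | h
  · have neg_odd : Odd (nPlus (-μ)) := (Nat.odd_add.mp (by rwa [nPlus_neg_add_nPlus])).mpr h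
    rw [hw _ neg_odd, mul_zero]
  · rw [hw _ h, zero_mul]

end CombinatorialLine

/-- The quadratic sum rule `2^{N−1} w(−⋯−)² Σ_μ v(μ)² = (Σ_μ v(μ))² Σ_μ w(μ)²`. -/
theorem quadratic_sum_rule (N : ℕ) [NeZero N]
    (hN : Odd N) (α : ℝ) (hα : α ≠ 1)
    (v w : StateSpace N) (hv0 : v ≠ 0) (hw0 : w ≠ 0)
    (hv : Halpha N α v = ((Eval N α : ℝ) : ℂ) • v)
    (hw : Halpha N ((α + 3) / (α - 1)) w = ((Eval N ((α + 3) / (α - 1)) : ℝ) : ℂ) • w)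
    (hvpar : ∀ μ : Config N, Odd (nPlus μ) → v μ = 0)
    (hwpar : ∀ μ : Config N, Odd (nPlus μ) → w μ = 0)
    (hwm : w (fun _ => -1) ≠ 0)
    (hdim : Module.finrank ℂ
      (Module.End.eigenspace (HalphaL N ((α + 3) / (α - 1)))
        ((Eval N ((α + 3) / (α - 1)) : ℝ) : ℂ)) = 2) :
    2 ^ (N - 1) * w (fun _ => -1) ^ 2 * ∑ μ : Config N, v μ ^ 2
      = (∑ μ : Config N, v μ) ^ 2 * ∑ μ : Config N, w μ ^ 2 := by
  have w_disjoint : ∀ μ, w μ * w (-μ) = 0 := mul_apply_neg_eq_zero_of_even hN hwpar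
  have w_all_plus : w (-(-1)) = 0 := (mul_eq_zero_iff_left hwm).mp (w_disjoint (-1))
  have w_mem : w ∈ combinatorialEigenspace N ((α + 3) / (α - 1)) :=
    Module.End.mem_eigenspace_iff.mpr hw
  have walsh_mem : walsh (ZMod N) ℂ v ∈ combinatorialEigenspace N ((α + 3) / (α - 1)) :=
    walsh_mem_combinatorialEigenspace_dual hα (Module.End.mem_eigenspace_iff.mpr hv)
  obtain ⟨a, ha⟩ : ∃ a : ℂ, walsh (ZMod N) ℂ v = a • (w + w ∘ Neg.neg) :=
    exists_eq_smul_add_comp_of_finrank_eq_two hdim (neg_neg (-1)) w_mem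
      (comp_neg_mem_combinatorialEigenspace w_mem) hwm w_all_plus walsh_mem
      (walsh_neg_of_even hvpar (-1))
  have sum_v : ∑ μ, v μ = a * w (-1) := by
    rw [← walsh_neg_one, ha, Pi.smul_apply, Pi.add_apply, Function.comp_apply, w_all_plus,
      add_zero, smul_eq_mul]
  have sum_v_sq : 2 ^ N * ∑ μ, v μ ^ 2 = 2 * a ^ 2 * ∑ μ, w μ ^ 2 := by
    simpa only [ZMod.card] using sum_sq_of_walsh_eq_smul_add_comp_neg ha w_disjoint
  rw [← mul_pow_sub_one (NeZero.ne N)] at sum_v_sq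
  change 2 ^ (N - 1) * w (-1) ^ 2 * _ = _
  rw [sum_v]
  linear_combination w (-1) ^ 2 / 2 * sum_v_sq
end

section
/- Let N ≥ 2, let a, b, c, d ∈ ℂ, and let Φ : {−1,+1}^N → ℂ satisfy, for all μ ∈ {−1,+1} and all μ₃,…,μ_N ∈ {−1,+1}, the two equations a·Φ(μ,μ,μ₃,…,μ_N) + d·Φ(−μ,−μ,μ₃,…,μ_N) = (a+b)·Φ(μ,μ₃,…,μ_N,μ) and c·Φ(μ,−μ,μ₃,…,μ_N) + b·Φ(−μ,μ,μ₃,…,μ_N) = (a+b)·Φ(μ,μ₃,…,μ_N,−μ). Then (a−c) · Σ_{μ,μ₃,…,μ_N} Φ(μ,−μ,μ₃,…,μ_N) = (d−b) · Σ_{μ,μ₃,…,μ_N} Φ(μ,μ,μ₃,…,μ_N), i.e. the total weight of configurations whose first two spins are antiparallel and the total weight of configurations whose first two spins are parallel are in the ratio (d−b) : (a−c). (These two equations express that Φ is an eigenvector of the one-defect shift operator U(v) of the eight-vertex model with Boltzmann weights a, b, c, d and eigenvalue a + b.) -/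
open Finset

/-!
Summing the two eigenvalue equations over the remaining spins `μ₃, …, μ_N` leaves only two-spin
marginals: those of the first two spins on the left, those of the first and last spins on the right.
Flipping both spins preserves the parallel total `P` and the antiparallel total `A` of the first two
spins, so the left-hand sides add up to `(a + d) P + (b + c) A`. Every pair of spins is either
parallel or antiparallel, so for eigenvalue `Λ` the right-hand sides add up to `Λ` times the total
weight, which is `Λ (P + A)`.
-/

theorem sum_smul_add_smul_neg {G R M : Type*} [Fintype G] [InvolutiveNeg G] [Semiring R]
    [AddCommMonoid M] [Module R M] (r s : R) (g : G → M) :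
    ∑ x, (r • g x + s • g (-x)) = (r + s) • ∑ x, g x := by
  have sum_neg : ∑ x, g (-x) = ∑ x, g x := Equiv.sum_comp (Equiv.neg G) g
  rw [sum_add_distrib, ← smul_sum, ← smul_sum, sum_neg, add_smul]

theorem sum_apply_self_add_sum_apply_neg {M : Type*} [AddCommMonoid M] (g : ℤˣ → ℤˣ → M) :
    ∑ μ, g μ μ + ∑ μ, g μ (-μ) = ∑ μ, ∑ ν, g μ ν := by
  rw [← sum_add_distrib]
  refine sum_congr rfl fun μ _ => ?_
  rcases Int.units_eq_one_or μ with rfl | rfl <;> simp [add_comm]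

theorem sum_sum_cons_eq_sum_sum_snoc {α M : Type*} [Fintype α] [AddCommMonoid M] {n : ℕ}
    (f : (Fin (n + 1) → α) → M) :
    ∑ x : α, ∑ t : Fin n → α, f (Fin.cons x t) = ∑ x : α, ∑ t : Fin n → α, f (Fin.snoc t x) := by
  rw [← Fintype.sum_prod_type', ← Fintype.sum_prod_type']
  exact ((Fin.consEquiv fun _ => α).sum_comp f).trans ((Fin.snocEquiv fun _ => α).sum_comp f).symm

section Module

variable {R M : Type*} [Ring R] [AddCommGroup M] [Module R M] {a b c d Λ : R}

theorem smul_sum_antiparallel_eq_smul_sum_parallel {p q : ℤˣ → ℤˣ → M}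
    (hpar : ∀ μ, a • p μ μ + d • p (-μ) (-μ) = Λ • q μ μ)
    (hanti : ∀ μ, c • p μ (-μ) + b • p (-μ) μ = Λ • q μ (-μ))
    (htotal : ∑ μ, ∑ ν, p μ ν = ∑ μ, ∑ ν, q μ ν) :
    (Λ - (c + b)) • ∑ μ, p μ (-μ) = (a + d - Λ) • ∑ μ, p μ μ := by
  have parallel : (a + d) • ∑ μ, p μ μ = Λ • ∑ μ, q μ μ := by
    rw [← sum_smul_add_smul_neg, smul_sum]
    exact sum_congr rfl fun μ _ => hpar μ
  have antiparallel : (c + b) • ∑ μ, p μ (-μ) = Λ • ∑ μ, q μ (-μ) := by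
    rw [← sum_smul_add_smul_neg, smul_sum]
    simp only [neg_neg, hanti]
  have total : Λ • ∑ μ, p μ μ + Λ • ∑ μ, p μ (-μ) = Λ • ∑ μ, q μ μ + Λ • ∑ μ, q μ (-μ) := by
    simp only [← smul_add, sum_apply_self_add_sum_apply_neg, htotal]
  rw [sub_smul, sub_smul, parallel, antiparallel, sub_eq_sub_iff_add_eq_add, add_comm, total]

theorem antiferromagneticity_ratio_general {n : ℕ} {Φ : (Fin (n + 2) → ℤˣ) → M}
    (hpar : ∀ (μ : ℤˣ) (t : Fin n → ℤˣ),
      a • Φ (Fin.cons μ (Fin.cons μ t)) + d • Φ (Fin.cons (-μ) (Fin.cons (-μ) t))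
        = Λ • Φ (Fin.cons μ (Fin.snoc t μ)))
    (hanti : ∀ (μ : ℤˣ) (t : Fin n → ℤˣ),
      c • Φ (Fin.cons μ (Fin.cons (-μ) t)) + b • Φ (Fin.cons (-μ) (Fin.cons μ t))
        = Λ • Φ (Fin.cons μ (Fin.snoc t (-μ)))) :
    (Λ - (c + b)) • ∑ μ : ℤˣ, ∑ t : Fin n → ℤˣ, Φ (Fin.cons μ (Fin.cons (-μ) t))
      = (a + d - Λ) • ∑ μ : ℤˣ, ∑ t : Fin n → ℤˣ, Φ (Fin.cons μ (Fin.cons μ t)) := by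
  apply smul_sum_antiparallel_eq_smul_sum_parallel
    (p := fun μ ν => ∑ t : Fin n → ℤˣ, Φ (Fin.cons μ (Fin.cons ν t)))
    (q := fun μ ν => ∑ t : Fin n → ℤˣ, Φ (Fin.cons μ (Fin.snoc t ν)))
  · intro μ
    simp only [smul_sum, ← sum_add_distrib, hpar]
  · intro μ
    simp only [smul_sum, ← sum_add_distrib, hanti]
  · exact sum_congr rfl fun μ _ => sum_sum_cons_eq_sum_sum_snoc fun s => Φ (Fin.cons μ s)

end Module

/-- If `Φ` is an eigenvector of the one-defect shift operator of the eight-vertex model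
with Boltzmann weights `a, b, c, d` and eigenvalue `a + b` (the two displayed equations),
then the antiparallel and parallel total weights are in the ratio `(d−b) : (a−c)`. -/
theorem antiferromagneticity_ratio (n : ℕ) (a b c d : ℂ)
    (Φ : (Fin (n + 2) → ℤˣ) → ℂ)
    (h1 : ∀ (μ : ℤˣ) (t : Fin n → ℤˣ),
      a * Φ (Fin.cons μ (Fin.cons μ t)) + d * Φ (Fin.cons (-μ) (Fin.cons (-μ) t))
        = (a + b) * Φ (Fin.cons μ (Fin.snoc t μ)))
    (h2 : ∀ (μ : ℤˣ) (t : Fin n → ℤˣ),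
      c * Φ (Fin.cons μ (Fin.cons (-μ) t)) + b * Φ (Fin.cons (-μ) (Fin.cons μ t))
        = (a + b) * Φ (Fin.cons μ (Fin.snoc t (-μ)))) :
    (a - c) * ∑ μ : ℤˣ, ∑ t : Fin n → ℤˣ, Φ (Fin.cons μ (Fin.cons (-μ) t))
      = (d - b) * ∑ μ : ℤˣ, ∑ t : Fin n → ℤˣ, Φ (Fin.cons μ (Fin.cons μ t)) := by
  have ratio := antiferromagneticity_ratio_general (Λ := a + b) h1 h2
  rwa [add_sub_add_right_eq_sub, add_sub_add_left_eq_sub] at ratio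
end

section
/- Let α ∈ ℝ and let Ψ : {−1,+1}⁵ → ℂ be defined by: Ψ = α + α³ on (−,−,−,−,−); Ψ = 1 + α² on the 5 cyclic shifts of (−,−,−,+,+); Ψ = 2 on the 5 cyclic shifts of (−,−,+,−,+); Ψ = 2α on the 5 cyclic shifts of (−,+,+,+,+); and Ψ(μ) = 0 otherwise. Then (α+1) · Σ_{μ,μ₃,μ₄,μ₅} Ψ(μ,−μ,μ₃,μ₄,μ₅) = 2 · Σ_{μ,μ₃,μ₄,μ₅} Ψ(μ,μ,μ₃,μ₄,μ₅), where the sums run over μ, μ₃, μ₄, μ₅ ∈ {−1,+1}; equivalently, for α ≠ −1, the chain degree of antiferromagneticity Ξ(α) = [Σ Ψ(μ,−μ,μ₃,μ₄,μ₅)] / [Σ Ψ(μ,μ,μ₃,μ₄,μ₅)] equals 2/(α+1). -/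
open Finset

/-- `ν` is a cyclic shift of `c`: `ν_j = c_{j+k}` for some `k`. -/
def isShiftOf {N : ℕ} (ν c : Config N) : Prop := ∃ k : ZMod N, ∀ j, ν j = c (j + k)

instance {N : ℕ} [NeZero N] (ν c : Config N) : Decidable (isShiftOf ν c) :=
  inferInstanceAs (Decidable (∃ k : ZMod N, ∀ j, ν j = c (j + k)))

/-- The configuration whose spins are `+1` exactly on the set `s`. -/
def cfgOfPlus (N : ℕ) (s : Finset (ZMod N)) : Config N := fun j => if j ∈ s then 1 else -1

/-- The `N = 5` eigenvector: `α + α³` on `(−,−,−,−,−)`, `1 + α²` on the cyclic shifts of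
`(−,−,−,+,+)`, `2` on the cyclic shifts of `(−,−,+,−,+)`, `2α` on the cyclic shifts of
`(−,+,+,+,+)`, and `0` elsewhere. -/
noncomputable def Psi5 (α : ℝ) : StateSpace 5 := fun μ =>
  if μ = cfgOfPlus 5 ∅ then ((α + α ^ 3 : ℝ) : ℂ)
  else if isShiftOf μ (cfgOfPlus 5 {3, 4}) then ((1 + α ^ 2 : ℝ) : ℂ)
  else if isShiftOf μ (cfgOfPlus 5 {2, 4}) then 2
  else if isShiftOf μ (cfgOfPlus 5 {1, 2, 3, 4}) then ((2 * α : ℝ) : ℂ)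
  else 0

/-- The length-5 configuration `(a, b, c, d, e)`. -/
def cfg5 (a b c d e : ℤˣ) : Config 5 := fun j =>
  if j = 0 then a else if j = 1 then b else if j = 2 then c else if j = 3 then d else e

/-!
The nonzero values of `Ψ` are constant on the shift classes of four configurations. As `c` runs
through its five distinct shifts, each of its bonds is moved to the first two sites exactly once,
so the shift class of `c` starts with antiparallel spins as often as `c` has domain walls, and with
parallel spins as often as it has parallel bonds. The three classes `(−,−,−,+,+)`, `(−,−,+,−,+)`
and `(−,+,+,+,+)` have `2`, `4` and `2` domain walls, whence the weights `2 (α² + 2α + 5)` and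
`(α + 1) (α² + 2α + 5)`, the uniform configuration contributing `α + α³` to the latter.
-/

section CyclicShift

variable {N : ℕ}

/-- The cyclic shift `j ↦ c (j + k)` of a configuration: the shifts of `c` in the sense of
`isShiftOf`, parametrised by the shift vector. -/
def cyclicShift (c : Config N) (k : ZMod N) : Config N := fun j => c (j + k)

/-- The nearest-neighbour bonds `(j, j + 1)` of relative sign `σ`, each encoded by its left site
`j`: the parallel bonds for `σ = 1`, the domain walls for `σ = -1`. Their number counts the shift
vectors `k` for which `cyclicShift c k` starts with two spins of relative sign `σ`. -/
def bonds [NeZero N] (c : Config N) (σ : ℤˣ) : Finset (ZMod N) :=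
  {j | c (j + 1) = σ * c j}

lemma isShiftOf_iff_exists_cyclicShift_eq {ν c : Config N} :
    isShiftOf ν c ↔ ∃ k, cyclicShift c k = ν := by
  simp only [isShiftOf, cyclicShift, funext_iff, eq_comm]

lemma isShiftOf_of_common_shift {μ c d : Config N} (hc : isShiftOf μ c) (hd : isShiftOf μ d) :
    isShiftOf c d := by
  obtain ⟨k, hk⟩ := hc
  obtain ⟨l, hl⟩ := hd
  refine ⟨l - k, fun j => ?_⟩
  calc c j = μ (j - k) := by rw [hk, sub_add_cancel]
    _ = d (j + (l - k)) := by rw [hl, sub_add_eq_add_sub, add_sub_assoc]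

lemma mem_bonds_cyclicShift [NeZero N] {c : Config N} {σ : ℤˣ} {j k : ZMod N} :
    j ∈ bonds (cyclicShift c k) σ ↔ j + k ∈ bonds c σ := by
  simp only [bonds, cyclicShift, mem_filter_univ, add_right_comm]

/-- A period `d ≠ 0` of a configuration on `ℤ/p` generates `ℤ/p`, so that `1` is a period too,
which rules out domain walls. -/
lemma cyclicShift_injective {p : ℕ} [Fact p.Prime] {c : Config p} (hc : (bonds c (-1)).Nonempty) :
    Function.Injective (cyclicShift c) := by
  intro k l hkl
  by_contra hne
  have periodic_sub : Function.Periodic c (k - l) := fun j => by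
    simpa only [cyclicShift, sub_add_cancel, sub_add_eq_add_sub, add_sub_assoc]
      using congrFun hkl (j - l)
  have periodic_one : Function.Periodic c 1 := by
    simpa [inv_mul_cancel₀ (sub_ne_zero.mpr hne)] using periodic_sub.nsmul (k - l)⁻¹.val
  obtain ⟨j, hj⟩ := hc
  rw [bonds, mem_filter_univ, periodic_one j, neg_one_mul] at hj
  exact units_ne_neg_self (c j) hj

lemma sum_filter_isShiftOf {M : Type*} [AddCommMonoid M] [NeZero N] {c : Config N}
    (hc : Function.Injective (cyclicShift c)) (f : Config N → M) :
    ∑ μ with isShiftOf μ c, f μ = ∑ k, f (cyclicShift c k) := by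
  have orbit_eq : ({μ | isShiftOf μ c} : Finset (Config N)) = univ.map ⟨cyclicShift c, hc⟩ := by
    ext μ
    simp [isShiftOf_iff_exists_cyclicShift_eq]
  rw [orbit_eq, sum_map, Function.Embedding.coeFn_mk]

/-- Shifting by `k` moves bond `k` to bond `0`, so each bond of sign `σ` is seen exactly once. -/
lemma sum_bond_ite_isShiftOf {M : Type*} [AddCommMonoid M] [NeZero N] {c : Config N}
    (hc : Function.Injective (cyclicShift c)) (σ : ℤˣ) (w : M) :
    ∑ μ with 0 ∈ bonds μ σ, (if isShiftOf μ c then w else 0) = #(bonds c σ) • w := by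
  calc ∑ μ with 0 ∈ bonds μ σ, (if isShiftOf μ c then w else 0)
      = ∑ μ with isShiftOf μ c, if 0 ∈ bonds μ σ then w else 0 := by
        rw [← sum_filter, ← sum_filter, filter_comm]
    _ = ∑ k, if k ∈ bonds c σ then w else 0 := by
        simp only [sum_filter_isShiftOf hc, mem_bonds_cyclicShift, zero_add]
    _ = #(bonds c σ) • w := by
        rw [← sum_filter, filter_univ_mem, sum_const]

end CyclicShift

lemma sum_cfg5_bond {M : Type*} [AddCommMonoid M] (f : Config 5 → M) (σ : ℤˣ) :
    ∑ μ : ℤˣ, ∑ μ₃ : ℤˣ, ∑ μ₄ : ℤˣ, ∑ μ₅ : ℤˣ, f (cfg5 μ (σ * μ) μ₃ μ₄ μ₅)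
      = ∑ μ with 0 ∈ bonds μ σ, f μ := by
  have zero_mem_bonds (ν : Config 5) : 0 ∈ bonds ν σ ↔ ν 1 = σ * ν 0 := by
    rw [bonds, mem_filter_univ, zero_add]
  simp only [← Fintype.sum_prod_type']
  refine sum_nbij' (fun (μ, μ₃, μ₄, μ₅) => cfg5 μ (σ * μ) μ₃ μ₄ μ₅)
    (fun ν => (ν 0, ν 2, ν 3, ν 4)) ?_ ?_ ?_ ?_ ?_
  · exact fun _ _ => (mem_filter_univ _).mpr ((zero_mem_bonds _).mpr rfl)
  · exact fun _ _ => mem_univ _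
  · exact fun _ _ => rfl
  · intro ν hν
    have bond_zero : ν 1 = σ * ν 0 := (zero_mem_bonds ν).mp ((mem_filter_univ ν).mp hν)
    funext j
    fin_cases j
    exacts [rfl, bond_zero.symm, rfl, rfl, rfl]
  · exact fun _ _ => rfl

/-- Each configuration lies in at most one of the four shift classes, so the nested conditionals
become a sum of indicators. -/
lemma Psi5_eq_sum_ite (α : ℝ) (μ : Config 5) :
    Psi5 α μ = (if μ = cfgOfPlus 5 ∅ then (α + α ^ 3 : ℂ) else 0)
      + (if isShiftOf μ (cfgOfPlus 5 {3, 4}) then (1 + α ^ 2 : ℂ) else 0)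
      + (if isShiftOf μ (cfgOfPlus 5 {2, 4}) then 2 else 0)
      + (if isShiftOf μ (cfgOfPlus 5 {1, 2, 3, 4}) then (2 * α : ℂ) else 0) := by
  have not_shift₀₁ : ¬ isShiftOf (cfgOfPlus 5 ∅) (cfgOfPlus 5 {3, 4}) := by decide
  have not_shift₀₂ : ¬ isShiftOf (cfgOfPlus 5 ∅) (cfgOfPlus 5 {2, 4}) := by decide
  have not_shift₀₃ : ¬ isShiftOf (cfgOfPlus 5 ∅) (cfgOfPlus 5 {1, 2, 3, 4}) := by decide
  have not_shift₁₂ : ¬ isShiftOf (cfgOfPlus 5 {3, 4}) (cfgOfPlus 5 {2, 4}) := by decide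
  have not_shift₁₃ : ¬ isShiftOf (cfgOfPlus 5 {3, 4}) (cfgOfPlus 5 {1, 2, 3, 4}) := by decide
  have not_shift₂₃ : ¬ isShiftOf (cfgOfPlus 5 {2, 4}) (cfgOfPlus 5 {1, 2, 3, 4}) := by decide
  by_cases all_down : μ = cfgOfPlus 5 ∅
  · simp [Psi5, all_down, not_shift₀₁, not_shift₀₂, not_shift₀₃]
  by_cases shift₁ : isShiftOf μ (cfgOfPlus 5 {3, 4})
  · simp [Psi5, all_down, shift₁, mt (isShiftOf_of_common_shift shift₁) not_shift₁₂,
      mt (isShiftOf_of_common_shift shift₁) not_shift₁₃]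
  by_cases shift₂ : isShiftOf μ (cfgOfPlus 5 {2, 4})
  · simp [Psi5, all_down, shift₁, shift₂, mt (isShiftOf_of_common_shift shift₂) not_shift₂₃]
  · simp [Psi5, all_down, shift₁, shift₂]

lemma sum_bond_Psi5 (α : ℝ) (σ : ℤˣ) :
    ∑ μ with 0 ∈ bonds μ σ, Psi5 α μ
      = (if 0 ∈ bonds (cfgOfPlus 5 ∅) σ then (α + α ^ 3 : ℂ) else 0)
        + #(bonds (cfgOfPlus 5 {3, 4}) σ) • (1 + α ^ 2 : ℂ)
        + #(bonds (cfgOfPlus 5 {2, 4}) σ) • (2 : ℂ)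
        + #(bonds (cfgOfPlus 5 {1, 2, 3, 4}) σ) • (2 * α : ℂ) := by
  have walls₁ : (bonds (cfgOfPlus 5 {3, 4}) (-1)).Nonempty := by decide
  have walls₂ : (bonds (cfgOfPlus 5 {2, 4}) (-1)).Nonempty := by decide
  have walls₃ : (bonds (cfgOfPlus 5 {1, 2, 3, 4}) (-1)).Nonempty := by decide
  have : Fact (Nat.Prime 5) := ⟨Nat.prime_five⟩
  simp only [Psi5_eq_sum_ite, sum_add_distrib, sum_ite_eq', mem_filter_univ,
    sum_bond_ite_isShiftOf (cyclicShift_injective walls₁),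
    sum_bond_ite_isShiftOf (cyclicShift_injective walls₂),
    sum_bond_ite_isShiftOf (cyclicShift_injective walls₃)]

lemma sum_Psi5_antiparallel (α : ℝ) :
    ∑ μ : ℤˣ, ∑ μ₃ : ℤˣ, ∑ μ₄ : ℤˣ, ∑ μ₅ : ℤˣ, Psi5 α (cfg5 μ (-μ) μ₃ μ₄ μ₅)
      = 2 * ((α : ℂ) ^ 2 + 2 * α + 5) := by
  have walls₀ : 0 ∉ bonds (cfgOfPlus 5 ∅) (-1) := by decide
  have walls₁ : #(bonds (cfgOfPlus 5 {3, 4}) (-1)) = 2 := by decide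
  have walls₂ : #(bonds (cfgOfPlus 5 {2, 4}) (-1)) = 4 := by decide
  have walls₃ : #(bonds (cfgOfPlus 5 {1, 2, 3, 4}) (-1)) = 2 := by decide
  have sum_eq := sum_cfg5_bond (Psi5 α) (-1)
  simp only [neg_one_mul] at sum_eq
  rw [sum_eq, sum_bond_Psi5, if_neg walls₀, walls₁, walls₂, walls₃]
  simp only [nsmul_eq_mul, Nat.cast_ofNat]
  ring

lemma sum_Psi5_parallel (α : ℝ) :
    ∑ μ : ℤˣ, ∑ μ₃ : ℤˣ, ∑ μ₄ : ℤˣ, ∑ μ₅ : ℤˣ, Psi5 α (cfg5 μ μ μ₃ μ₄ μ₅)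
      = ((α : ℂ) + 1) * ((α : ℂ) ^ 2 + 2 * α + 5) := by
  have parallel₀ : 0 ∈ bonds (cfgOfPlus 5 ∅) 1 := by decide
  have parallel₁ : #(bonds (cfgOfPlus 5 {3, 4}) 1) = 3 := by decide
  have parallel₂ : #(bonds (cfgOfPlus 5 {2, 4}) 1) = 1 := by decide
  have parallel₃ : #(bonds (cfgOfPlus 5 {1, 2, 3, 4}) 1) = 3 := by decide
  have sum_eq := sum_cfg5_bond (Psi5 α) 1
  simp only [one_mul] at sum_eq
  rw [sum_eq, sum_bond_Psi5, if_pos parallel₀, parallel₁, parallel₂, parallel₃]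
  simp only [nsmul_eq_mul, Nat.cast_ofNat, Nat.cast_one]
  ring

/-- For `N = 5`: `(α+1) Σ Ψ(μ,−μ,μ₃,μ₄,μ₅) = 2 Σ Ψ(μ,μ,μ₃,μ₄,μ₅)`, i.e. for `α ≠ −1`
the chain degree of antiferromagneticity `Ξ(α)` equals `2/(α+1)`. -/
theorem antiferromagneticity_N5 (α : ℝ) :
    (((α : ℂ) + 1) * ∑ μ : ℤˣ, ∑ μ₃ : ℤˣ, ∑ μ₄ : ℤˣ, ∑ μ₅ : ℤˣ,
          Psi5 α (cfg5 μ (-μ) μ₃ μ₄ μ₅)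
        = 2 * ∑ μ : ℤˣ, ∑ μ₃ : ℤˣ, ∑ μ₄ : ℤˣ, ∑ μ₅ : ℤˣ,
          Psi5 α (cfg5 μ μ μ₃ μ₄ μ₅))
      ∧ (α ≠ -1 →
        (∑ μ : ℤˣ, ∑ μ₃ : ℤˣ, ∑ μ₄ : ℤˣ, ∑ μ₅ : ℤˣ, Psi5 α (cfg5 μ (-μ) μ₃ μ₄ μ₅))
            / (∑ μ : ℤˣ, ∑ μ₃ : ℤˣ, ∑ μ₄ : ℤˣ, ∑ μ₅ : ℤˣ, Psi5 α (cfg5 μ μ μ₃ μ₄ μ₅))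
          = 2 / ((α : ℂ) + 1)) := by
  rw [sum_Psi5_antiparallel, sum_Psi5_parallel]
  refine ⟨by ring, fun _ => ?_⟩
  have common_factor_ne_zero : (α : ℂ) ^ 2 + 2 * α + 5 ≠ 0 := by
    have real_ne_zero : α ^ 2 + 2 * α + 5 ≠ 0 := by nlinarith only [sq_nonneg (α + 1)]
    exact_mod_cast real_ne_zero
  exact mul_div_mul_right _ _ common_factor_ne_zero
end
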